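/- Let X be a real Banach space with a Schauder basis (e_n). Then (e_n) is partially greedy if and only if there exists a constant C such that ‖x − G_m(x)‖ ≤ C‖x − Σ_{i∈A} a_i e_i‖ for all x ∈ X, all m ∈ ℕ, every greedy ordering for x, every finite set A ⊂ ℕ with |A| = m and max A < α_m(x), and all real scalars (a_i)_{i∈A} (i.e., ‖x − G_m(x)‖ ≤ C·σ^L_m(x)). -/

import Mathlib

open Filter Topology

/-- A Schauder basis of a real normed space `X`, given by basis vectors `e n` together with
biorthogonal (coordinate) functionals `f n`, such that every `x` is the limit of its
partial-sum expansion `∑_{n < N} f n x • e n`. -/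
structure SchauderBasisSys (X : Type*) [NormedAddCommGroup X] [NormedSpace ℝ X] where
  e : ℕ → X
  f : ℕ → X →L[ℝ] ℝ
  biorth : ∀ m n : ℕ, f m (e n) = if m = n then (1 : ℝ) else 0
  expansion : ∀ x : X,
    Filter.Tendsto (fun N : ℕ => ∑ n ∈ Finset.range N, f n x • e n) Filter.atTop (nhds x)

namespace SchauderBasisSys

variable {X : Type*} [NormedAddCommGroup X] [NormedSpace ℝ X]

/-- The coordinate projection onto a finite set `A` of indices: `P_A x = ∑_{i ∈ A} e_i^*(x) e_i`. -/
noncomputable def P (S : SchauderBasisSys X) (A : Finset ℕ) (x : X) : X :=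
  ∑ i ∈ A, S.f i x • S.e i

/-- The indicator vector `1_A = ∑_{i ∈ A} e_i`. -/
noncomputable def ind (S : SchauderBasisSys X) (A : Finset ℕ) : X :=
  ∑ i ∈ A, S.e i

/-- A greedy ordering for `x`: an injection `ρ : ℕ → ℕ` whose range contains the support of `x`
and which rearranges the coordinates of `x` in nonincreasing order of absolute value. -/
def IsGreedyOrdering (S : SchauderBasisSys X) (x : X) (ρ : ℕ → ℕ) : Prop :=
  Function.Injective ρ ∧ (∀ n : ℕ, S.f n x ≠ 0 → n ∈ Set.range ρ) ∧
    ∀ j k : ℕ, j ≤ k → |S.f (ρ k) x| ≤ |S.f (ρ j) x|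

/-- The greedy set `Λ_m(x) = {ρ(0), …, ρ(m-1)}` associated to a greedy ordering `ρ`. -/
def Lam (ρ : ℕ → ℕ) (m : ℕ) : Finset ℕ := (Finset.range m).image ρ

/-- The `m`-th greedy approximation `G_m(x) = ∑_{j < m} e_{ρ(j)}^*(x) e_{ρ(j)}`. -/
noncomputable def G (S : SchauderBasisSys X) (x : X) (ρ : ℕ → ℕ) (m : ℕ) : X :=
  ∑ j ∈ Finset.range m, S.f (ρ j) x • S.e (ρ j)

/-- Quasi-greedy: `‖G_m(x)‖ ≤ K ‖x‖` uniformly. -/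
def QuasiGreedy (S : SchauderBasisSys X) : Prop :=
  ∃ K : ℝ, ∀ (x : X) (ρ : ℕ → ℕ) (m : ℕ),
    S.IsGreedyOrdering x ρ → ‖S.G x ρ m‖ ≤ K * ‖x‖

/-- Conservative: `‖1_A‖ ≤ Γ ‖1_B‖` whenever `|A| ≤ |B|` and `max A < min B`. -/
def Conservative (S : SchauderBasisSys X) : Prop :=
  ∃ Γ : ℝ, ∀ A B : Finset ℕ, A.card ≤ B.card →
    (∀ i ∈ A, ∀ j ∈ B, i < j) → ‖S.ind A‖ ≤ Γ * ‖S.ind B‖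

/-- Reverse conservative: `‖1_A‖ ≤ Γ ‖1_B‖` whenever `|A| ≤ |B|` and `max B < min A`. -/
def ReverseConservative (S : SchauderBasisSys X) : Prop :=
  ∃ Γ : ℝ, ∀ A B : Finset ℕ, A.card ≤ B.card →
    (∀ i ∈ A, ∀ j ∈ B, j < i) → ‖S.ind A‖ ≤ Γ * ‖S.ind B‖

/-- Partially greedy: `‖x - G_m(x)‖ ≤ C ‖∑_{n ≥ m} e_n^*(x) e_n‖ = C ‖x - P_{[0,m)}(x)‖`. -/
def PartiallyGreedy (S : SchauderBasisSys X) : Prop :=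
  ∃ C : ℝ, ∀ (x : X) (ρ : ℕ → ℕ) (m : ℕ), S.IsGreedyOrdering x ρ →
    ‖x - S.G x ρ m‖ ≤ C * ‖x - S.P (Finset.range m) x‖

/-- Almost greedy: `‖x - G_m(x)‖ ≤ C inf{‖x - P_A(x)‖ : |A| ≤ m}`. -/
def AlmostGreedy (S : SchauderBasisSys X) : Prop :=
  ∃ C : ℝ, ∀ (x : X) (ρ : ℕ → ℕ) (m : ℕ) (A : Finset ℕ), S.IsGreedyOrdering x ρ →
    A.card ≤ m → ‖x - S.G x ρ m‖ ≤ C * ‖x - S.P A x‖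

end SchauderBasisSys

open SchauderBasisSys

/-!
Both properties are estimates for greedy sets, that is, finite sets `E` carrying coordinates at
least as large as all the others: a greedy set need not be reached by a greedy ordering of `x`
(whose coordinates need not tend to zero), but it is reached by one of every long enough partial
sum of `x`.

Suppose the basis is partially greedy, `Λ` is a greedy set of `x`, the set `A` lies to the left of
`Λ` and has the same cardinality, and `z = x - ∑_{i ∈ A} a_i e_i`. Adding to `Λ` the indices of the
coordinates of `z` in `A` that exceed some coordinate on `Λ` gives a greedy set `E` of `z`, and
`x - P_Λ x` differs from `z - P_E z` only by vectors supported on `A` whose coordinates are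
dominated by those of `x` on `Λ`. Such a vector `u` is controlled by the tail `w` of `x` from
`min Λ` on: if the remaining gaps to the left of `Λ` are filled with large coordinates, then the
partially greedy estimate removes exactly the filling and `P_Λ w` on one side, and everything but
`w` on the other.

Conversely, the coordinates common to a greedy set `E` and `D = {0, …, |E| - 1}` can be subtracted
from `x`, after which `D \ E` lies to the left of the greedy set `E \ D` and has as many elements.
-/

namespace SchauderBasisSys

variable {X : Type*} [NormedAddCommGroup X] [NormedSpace ℝ X]

/-- A greedy set of `x`: a finite set on which the coordinates of `x` are at least as large, in
absolute value, as all the others. These are the sets `Λ_m(x)`, freed from the greedy ordering. -/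
def IsGreedySet (S : SchauderBasisSys X) (x : X) (E : Finset ℕ) : Prop :=
  ∀ i ∈ E, ∀ j ∉ E, |S.f j x| ≤ |S.f i x|

/-- The partially greedy estimate with constant `C`, for greedy sets instead of greedy
orderings. -/
def PartiallyGreedyOnSets (S : SchauderBasisSys X) (C : ℝ) : Prop :=
  ∀ (x : X) (E : Finset ℕ), S.IsGreedySet x E →
    ‖x - S.P E x‖ ≤ C * ‖x - S.P (Finset.range E.card) x‖

/-- The estimate `‖x - G_m(x)‖ ≤ C σ^L_m(x)` for greedy sets instead of greedy orderings, with the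
infimum `σ^L_m(x)` spelled out as a bound for every competitor. -/
def LeftGreedyOnSets (S : SchauderBasisSys X) (C : ℝ) : Prop :=
  ∀ (x : X) (E A : Finset ℕ) (a : ℕ → ℝ), S.IsGreedySet x E → A.card = E.card →
    (∀ i ∈ A, ∀ j ∈ E, i < j) → ‖x - S.P E x‖ ≤ C * ‖x - ∑ i ∈ A, a i • S.e i‖

variable {S : SchauderBasisSys X}

section Coordinates

theorem coord_sum (A : Finset ℕ) (a : ℕ → ℝ) (n : ℕ) :
    S.f n (∑ i ∈ A, a i • S.e i) = if n ∈ A then a n else 0 := by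
  simp [S.biorth]

theorem coord_P (A : Finset ℕ) (x : X) (n : ℕ) :
    S.f n (S.P A x) = if n ∈ A then S.f n x else 0 :=
  coord_sum A (fun i => S.f i x) n

theorem coord_ind (A : Finset ℕ) (n : ℕ) : S.f n (S.ind A) = if n ∈ A then 1 else 0 := by
  simp [ind, S.biorth]

theorem ext_coord {x y : X} (h : ∀ n, S.f n x = S.f n y) : x = y := by
  refine tendsto_nhds_unique (S.expansion x) ?_
  simpa only [h] using S.expansion y

theorem e_ne_zero (S : SchauderBasisSys X) (n : ℕ) : S.e n ≠ 0 := fun h => by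
  simpa [h] using S.biorth n n

theorem P_P_of_subset {A B : Finset ℕ} (h : A ⊆ B) (x : X) : S.P A (S.P B x) = S.P A x :=
  Finset.sum_congr rfl fun i hi => by rw [coord_P, if_pos (h hi)]

theorem tendsto_P_range (x : X) : Tendsto (fun N => S.P (Finset.range N) x) atTop (𝓝 x) :=
  S.expansion x

theorem exists_norm_sub_P_range_le [CompleteSpace X] (S : SchauderBasisSys X) :
    ∃ B : ℝ, ∀ (n : ℕ) (x : X), ‖x - S.P (Finset.range n) x‖ ≤ B * ‖x‖ := by
  let T : ℕ → X →L[ℝ] X := fun n =>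
    ContinuousLinearMap.id ℝ X - ∑ i ∈ Finset.range n, (S.f i).smulRight (S.e i)
  have hT : ∀ n x, T n x = x - S.P (Finset.range n) x := fun n x => by simp [T, P]
  obtain ⟨B, hB⟩ := banach_steinhaus (g := T) fun x => by
    obtain ⟨M, hM⟩ := isBounded_iff_forall_norm_le.mp
      (Metric.isBounded_range_of_tendsto _ ((S.tendsto_P_range x).const_sub x))
    exact ⟨M, fun n => hT n x ▸ hM _ ⟨n, rfl⟩⟩
  exact ⟨B, fun n x => hT n x ▸ (T n).le_of_opNorm_le (hB n) x⟩

end Coordinates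

section GreedyOrderings

theorem card_Lam {ρ : ℕ → ℕ} (h : Function.Injective ρ) (m : ℕ) : (Lam ρ m).card = m := by
  simp [Lam, Finset.card_image_of_injective _ h]

theorem G_eq_P_Lam {ρ : ℕ → ℕ} (h : Function.Injective ρ) (x : X) (m : ℕ) :
    S.G x ρ m = S.P (Lam ρ m) x := by
  simp [G, P, Lam, Finset.sum_image h.injOn]

theorem IsGreedyOrdering.isGreedySet_Lam {x : X} {ρ : ℕ → ℕ} (h : S.IsGreedyOrdering x ρ)
    (m : ℕ) : S.IsGreedySet x (Lam ρ m) := by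
  intro i hi j hj
  obtain ⟨k, hk, rfl⟩ := Finset.mem_image.mp hi
  by_cases h0 : S.f j x = 0
  · simp [h0]
  · obtain ⟨l, rfl⟩ := h.2.1 j h0
    have hl : l ∉ Finset.range m := fun hl => hj (Finset.mem_image_of_mem ρ hl)
    simp only [Finset.mem_range] at hk hl
    exact h.2.2 k l (by omega)

theorem exists_perm_monotone_comp {α : Type*} [LinearOrder α] {key : ℕ → α}
    (h : ∀ᶠ n in atTop, ∀ m, key m ≤ key n) : ∃ ρ : Equiv.Perm ℕ, Monotone (key ∘ ρ) := by
  obtain ⟨M, hM⟩ := eventually_atTop.mp h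
  let σ : Equiv.Perm (Fin M) := Tuple.sort fun i => key i
  let ρ : Equiv.Perm ℕ := σ.extendDomain Fin.equivSubtype
  have ρ_of_lt : ∀ n (hn : n < M), ρ n = σ ⟨n, hn⟩ := fun n hn =>
    Equiv.Perm.extendDomain_apply_subtype σ Fin.equivSubtype hn
  have ρ_of_le : ∀ n, M ≤ n → ρ n = n := fun n hn =>
    Equiv.Perm.extendDomain_apply_not_subtype σ Fin.equivSubtype (not_lt.mpr hn)
  refine ⟨ρ, fun j k hjk => ?_⟩
  rcases lt_or_ge k M with hk | hk
  · simp only [Function.comp_apply, ρ_of_lt k hk, ρ_of_lt j (hjk.trans_lt hk)]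
    exact Tuple.monotone_sort (fun i : Fin M => key i)
      (show (⟨j, hjk.trans_lt hk⟩ : Fin M) ≤ ⟨k, hk⟩ from hjk)
  · simpa only [Function.comp_apply, ρ_of_le k hk] using hM k hk _

theorem Lam_card_eq_of_isLowerSet {ρ : ℕ → ℕ} (hρ : Function.Injective ρ) {E : Finset ℕ}
    (hE : ↑E ⊆ Set.range ρ) (hlower : IsLowerSet (ρ ⁻¹' E)) : Lam ρ E.card = E := by
  refine Finset.eq_of_subset_of_card_le (fun i hi => ?_) (card_Lam hρ _).ge
  obtain ⟨j, hj, rfl⟩ := Finset.mem_image.mp hi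
  by_contra hjE
  have hsub : E ⊆ Lam ρ j := fun n hn => by
    obtain ⟨k, rfl⟩ := hE hn
    refine Finset.mem_image_of_mem ρ (Finset.mem_range.mpr ?_)
    exact not_le.mp fun hjk => hjE (hlower hjk hn)
  have := Finset.card_le_card hsub
  rw [card_Lam hρ] at this
  exact absurd (Finset.mem_range.mp hj) (not_lt.mpr this)

theorem IsGreedySet.exists_isGreedyOrdering_Lam_eq {x : X} {E : Finset ℕ}
    (hE : S.IsGreedySet x E) (hx : ∀ᶠ n in atTop, S.f n x = 0) :
    ∃ ρ : ℕ → ℕ, S.IsGreedyOrdering x ρ ∧ Lam ρ E.card = E := by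
  -- Sorting lexicographically puts `E` first, also where coordinates off `E` tie with those on `E`.
  let key : ℕ → ℕ ×ₗ ℝ := fun n => toLex (if n ∈ E then 0 else 1, -|S.f n x|)
  have key_le : ∀ m n, key m ≤ key n ↔
      m ∈ E ∧ n ∉ E ∨ (m ∈ E ↔ n ∈ E) ∧ |S.f n x| ≤ |S.f m x| := by
    intro m n
    by_cases hm : m ∈ E <;> by_cases hn : n ∈ E <;> simp [key, Prod.Lex.le_iff, hm, hn]
  have hkey : ∀ᶠ n in atTop, ∀ m, key m ≤ key n := by
    filter_upwards [hx, Nat.cofinite_eq_atTop ▸ E.eventually_cofinite_notMem] with n hn hnE m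
    rw [key_le]
    by_cases hm : m ∈ E <;> simp [hm, hn, hnE]
  obtain ⟨ρ, hρ⟩ := exists_perm_monotone_comp hkey
  refine ⟨ρ, ⟨ρ.injective, fun n _ => ρ.surjective n, fun j k hjk => ?_⟩,
    Lam_card_eq_of_isLowerSet ρ.injective (fun n _ => ρ.surjective n) fun k j hjk hk => ?_⟩
  · rcases (key_le _ _).mp (hρ hjk) with ⟨hj, hk⟩ | ⟨-, hle⟩
    · exact hE _ hj _ hk
    · exact hle
  · rcases (key_le _ _).mp (hρ hjk) with ⟨hj, -⟩ | ⟨hiff, -⟩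
    · exact hj
    · exact hiff.mpr hk

theorem IsGreedySet.P_of_subset {x : X} {E B : Finset ℕ} (hE : S.IsGreedySet x E) (hEB : E ⊆ B) :
    S.IsGreedySet (S.P B x) E := by
  intro i hi j hj
  rw [coord_P, coord_P, if_pos (hEB hi)]
  split_ifs
  · exact hE i hi j hj
  · simp

theorem IsGreedySet.norm_sub_P_le_of_partial_sums {y b : X} {E : Finset ℕ} {C : ℝ}
    (hE : S.IsGreedySet y E)
    (h : ∀ᶠ M in atTop, ∀ ρ, S.IsGreedyOrdering (S.P (Finset.range M) y) ρ → Lam ρ E.card = E →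
      ‖S.P (Finset.range M) y - S.G (S.P (Finset.range M) y) ρ E.card‖ ≤
        C * ‖S.P (Finset.range M) y - b‖) :
    ‖y - S.P E y‖ ≤ C * ‖y - b‖ := by
  have hlim := S.tendsto_P_range y
  refine le_of_tendsto_of_tendsto ((hlim.sub_const (S.P E y)).norm)
    (((hlim.sub_const b).norm).const_mul C) ?_
  filter_upwards [h, Filter.tendsto_finset_range.eventually_ge_atTop E] with M hM hsub
  obtain ⟨ρ, hρ, hLam⟩ := (hE.P_of_subset hsub).exists_isGreedyOrdering_Lam_eq <| by
    filter_upwards [eventually_ge_atTop M] with n hn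
    simp [coord_P, hn]
  simpa only [G_eq_P_Lam hρ.1, hLam, P_P_of_subset hsub] using hM ρ hρ hLam

theorem partiallyGreedyOnSets_iff {C : ℝ} :
    S.PartiallyGreedyOnSets C ↔ ∀ (x : X) (ρ : ℕ → ℕ) (m : ℕ), S.IsGreedyOrdering x ρ →
      ‖x - S.G x ρ m‖ ≤ C * ‖x - S.P (Finset.range m) x‖ := by
  constructor
  · intro h x ρ m hρ
    simpa only [G_eq_P_Lam hρ.1, card_Lam hρ.1] using h x _ (hρ.isGreedySet_Lam m)
  · refine fun h x E hE => hE.norm_sub_P_le_of_partial_sums ?_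
    filter_upwards [eventually_ge_atTop E.card] with M hM ρ hρ _
    simpa only [P_P_of_subset (Finset.range_subset_range.mpr hM)] using h _ ρ E.card hρ

theorem leftGreedyOnSets_iff {C : ℝ} :
    S.LeftGreedyOnSets C ↔ ∀ (x : X) (ρ : ℕ → ℕ) (m : ℕ) (A : Finset ℕ) (a : ℕ → ℝ),
      S.IsGreedyOrdering x ρ → A.card = m → (∀ i ∈ A, ∀ j ∈ Lam ρ m, i < j) →
      ‖x - S.G x ρ m‖ ≤ C * ‖x - ∑ i ∈ A, a i • S.e i‖ := by
  constructor
  · intro h x ρ m A a hρ hA hlt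
    rw [G_eq_P_Lam hρ.1]
    exact h x _ A a (hρ.isGreedySet_Lam m) (hA.trans (card_Lam hρ.1 m).symm) hlt
  · exact fun h x E A a hE hcard hlt => hE.norm_sub_P_le_of_partial_sums <|
      Eventually.of_forall fun M ρ hρ hLam => h _ ρ _ A a hρ hcard (hLam.symm ▸ hlt)

end GreedyOrderings

section GreedySets

theorem PartiallyGreedyOnSets.one_le {C : ℝ} (hC : S.PartiallyGreedyOnSets C) : 1 ≤ C := by
  have h := hC (S.e 0) ∅ (by simp [IsGreedySet])
  simp only [P, Finset.sum_empty, Finset.card_empty, Finset.range_zero, sub_zero] at h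
  exact (le_mul_iff_one_le_left (norm_pos_iff.mpr (S.e_ne_zero 0))).mp h

theorem IsGreedySet.fill_gaps {w y : X} {A Λ : Finset ℕ} {N j₀ : ℕ} (hΛ : S.IsGreedySet w Λ)
    (hj₀ : j₀ ∈ Λ) (hN : ∀ j ∈ Λ, N ≤ j) (hyA : ∀ i ∈ A, ∀ j ∈ Λ, |S.f i y| ≤ |S.f j w|)
    (hgap : ∀ i < N, i ∉ A → S.f i y = S.f j₀ w) (htail : ∀ i, N ≤ i → S.f i y = S.f i w) :
    S.IsGreedySet y ((Finset.range N \ A) ∪ Λ) := by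
  intro i hi k hk
  simp only [Finset.mem_union, Finset.mem_sdiff, Finset.mem_range, not_or, not_and, not_not]
    at hi hk
  have hout : ∀ j ∈ Λ, |S.f k y| ≤ |S.f j w| := fun j hj => by
    by_cases hkA : k ∈ A
    · exact hyA k hkA j hj
    · exact htail k (not_lt.mp (mt hk.1 hkA)) ▸ hΛ j hj k hk.2
  rcases hi with ⟨hiN, hiA⟩ | hiΛ
  · exact hgap i hiN hiA ▸ hout j₀ hj₀
  · exact htail i (hN i hiΛ) ▸ hout i hiΛ

theorem PartiallyGreedyOnSets.norm_P_add_sub_P_le {C : ℝ} (hC : S.PartiallyGreedyOnSets C)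
    {u w : X} {A Λ : Finset ℕ} {N : ℕ} (hw : ∀ n < N, S.f n w = 0) (hΛ : S.IsGreedySet w Λ)
    (hcard : A.card = Λ.card) (hA : ∀ i ∈ A, i < N) (hN : ∀ j ∈ Λ, N ≤ j)
    (hu : ∀ i ∈ A, ∀ j ∈ Λ, |S.f i u| ≤ |S.f j w|) :
    ‖S.P A u + (w - S.P Λ w)‖ ≤ C * ‖w‖ := by
  obtain rfl | ⟨j₀, hj₀⟩ := Λ.eq_empty_or_nonempty
  · obtain rfl := Finset.card_eq_zero.mp hcard
    simpa [P] using le_mul_of_one_le_left (norm_nonneg w) hC.one_le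
  have hAN : A ⊆ Finset.range N := fun i hi => Finset.mem_range.mpr (hA i hi)
  set E := (Finset.range N \ A) ∪ Λ with hE
  have mem_E : ∀ n, n ∈ E ↔ (n < N ∧ n ∉ A) ∨ n ∈ Λ := fun n => by simp [hE]
  set y := S.P A u + S.f j₀ w • S.ind (Finset.range N \ A) + w with hy
  have fy : ∀ n, S.f n y =
      if n ∈ A then S.f n u else if n < N then S.f j₀ w else S.f n w := fun n => by
    simp only [hy, map_add, map_smul, coord_P, coord_ind, smul_eq_mul, Finset.mem_sdiff,
      Finset.mem_range]
    grind
  have card_E : E.card = N := by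
    have hdisj : Disjoint (Finset.range N \ A) Λ := Finset.disjoint_left.mpr fun i hi hi' => by
      have := hN i hi'
      simp only [Finset.mem_sdiff, Finset.mem_range] at hi
      omega
    rw [hE, Finset.card_union_of_disjoint hdisj, ← hcard, Finset.card_sdiff_add_card_eq_card hAN,
      Finset.card_range]
  have hyE : S.IsGreedySet y E := by
    refine hΛ.fill_gaps hj₀ hN (fun i hi j hj => ?_) (fun i hiN hiA => ?_) fun i hi => ?_
    · simpa only [fy, if_pos hi] using hu i hi j hj
    · rw [fy, if_neg hiA, if_pos hiN]
    · rw [fy, if_neg fun hiA => hi.not_gt (hA i hiA), if_neg hi.not_gt]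
  have hleft : y - S.P E y = S.P A u + (w - S.P Λ w) := S.ext_coord fun n => by
    simp only [map_sub, map_add, coord_P, fy, mem_E]
    grind
  have hright : y - S.P (Finset.range E.card) y = w := S.ext_coord fun n => by
    simp only [map_sub, coord_P, fy, card_E, Finset.mem_range]
    grind
  simpa only [hleft, hright] using hC y E hyE

theorem PartiallyGreedyOnSets.norm_P_le {C : ℝ} (hC : S.PartiallyGreedyOnSets C)
    {u x : X} {A Λ : Finset ℕ} {N : ℕ} (hΛ : S.IsGreedySet x Λ) (hcard : A.card = Λ.card)
    (hA : ∀ i ∈ A, i < N) (hN : ∀ j ∈ Λ, N ≤ j)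
    (hu : ∀ i ∈ A, ∀ j ∈ Λ, |S.f i u| ≤ |S.f j x|) :
    ‖S.P A u‖ ≤ 2 * C * ‖x - S.P (Finset.range N) x‖ := by
  set w := x - S.P (Finset.range N) x with hw
  have fw : ∀ n, S.f n w = if n < N then 0 else S.f n x := fun n => by
    simp only [hw, map_sub, coord_P, Finset.mem_range]
    grind
  have fw_of_mem : ∀ j ∈ Λ, S.f j w = S.f j x := fun j hj => by simp [fw, hN j hj]
  have hw0 : ∀ n < N, S.f n w = 0 := fun n hn => by simp [fw, hn]
  have hwΛ : S.IsGreedySet w Λ := fun j hj k hk => by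
    rw [fw k, fw_of_mem j hj]
    split_ifs
    · simp
    · exact hΛ j hj k hk
  have hsum : ‖S.P A u + (w - S.P Λ w)‖ ≤ C * ‖w‖ :=
    hC.norm_P_add_sub_P_le hw0 hwΛ hcard hA hN fun i hi j hj => fw_of_mem j hj ▸ hu i hi j hj
  have hzero : ‖S.P A 0 + (w - S.P Λ w)‖ ≤ C * ‖w‖ :=
    hC.norm_P_add_sub_P_le hw0 hwΛ hcard hA hN fun i _ j _ => by simp
  calc ‖S.P A u‖ = ‖(S.P A u + (w - S.P Λ w)) - (S.P A 0 + (w - S.P Λ w))‖ := by simp [P]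
    _ ≤ C * ‖w‖ + C * ‖w‖ := norm_sub_le_of_le hsum hzero
    _ = 2 * C * ‖w‖ := by ring

theorem IsGreedySet.exists_sub_P_eq {x z : X} {A Λ : Finset ℕ} (hΛ : S.IsGreedySet x Λ)
    (hdisj : Disjoint A Λ) (hz : ∀ n ∉ A, S.f n z = S.f n x) :
    ∃ E, S.IsGreedySet z E ∧ (∀ i, ∀ j ∈ Λ, |S.f i (z - S.P E z)| ≤ |S.f j x|) ∧
      x - S.P Λ x = (z - S.P E z) + (S.P A x - S.P A (z - S.P E z)) := by
  have notMem_A : ∀ j ∈ Λ, j ∉ A := fun j hj hjA => Finset.disjoint_left.mp hdisj hjA hj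
  set E := Λ ∪ A.filter fun i => ∃ j ∈ Λ, |S.f j x| < |S.f i z| with hE
  have mem_E : ∀ n, n ∈ E ↔ n ∈ Λ ∨ n ∈ A ∧ ∃ j ∈ Λ, |S.f j x| < |S.f n z| := fun n => by
    simp [hE]
  have hout : ∀ k ∉ E, ∀ j ∈ Λ, |S.f k z| ≤ |S.f j x| := fun k hk j hj => by
    rw [mem_E, not_or] at hk
    by_cases hkA : k ∈ A
    · exact not_lt.mp fun hlt => hk.2 ⟨hkA, j, hj, hlt⟩
    · exact hz k hkA ▸ hΛ j hj k hk.1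
  refine ⟨E, fun i hi k hk => ?_, fun i j hj => ?_, S.ext_coord fun n => ?_⟩
  · rcases (mem_E i).mp hi with hiΛ | ⟨-, j, hj, hlt⟩
    · exact hz i (notMem_A i hiΛ) ▸ hout k hk i hiΛ
    · exact (hout k hk j hj).trans hlt.le
  · rw [map_sub, coord_P]
    split_ifs with hiE
    · simp
    · simpa using hout i hiE j hj
  · simp only [map_sub, map_add, coord_P]
    grind

theorem PartiallyGreedyOnSets.leftGreedyOnSets {B C : ℝ} (hC : S.PartiallyGreedyOnSets C)
    (hB : ∀ (n : ℕ) (x : X), ‖x - S.P (Finset.range n) x‖ ≤ B * ‖x‖) :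
    S.LeftGreedyOnSets (5 * C * B) := by
  intro x Λ A a hΛ hcard hlt
  have hC0 : 0 ≤ C := zero_le_one.trans hC.one_le
  set z := x - ∑ i ∈ A, a i • S.e i with hz
  have fz : ∀ n ∉ A, S.f n z = S.f n x := fun n hn => by
    rw [hz, map_sub, coord_sum, if_neg hn, sub_zero]
  have hdisj : Disjoint A Λ := Finset.disjoint_left.mpr fun i hi hi' => (hlt i hi i hi').false
  obtain ⟨E, hE, hsmall, hdecomp⟩ := hΛ.exists_sub_P_eq hdisj fz
  set g := z - S.P E z
  set N := A.sup (· + 1)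
  have hA : ∀ i ∈ A, i < N := fun i hi => Finset.le_sup (f := (· + 1)) hi
  have hN : ∀ j ∈ Λ, N ≤ j := fun j hj => Finset.sup_le fun i hi => hlt i hi j hj
  have htail : x - S.P (Finset.range N) x = z - S.P (Finset.range N) z := S.ext_coord fun n => by
    simp only [map_sub, coord_P, Finset.mem_range]
    grind
  have hg : ‖g‖ ≤ C * (B * ‖z‖) := (hC z E hE).trans (by gcongr; exact hB _ z)
  have norm_P_le : ∀ u, (∀ i ∈ A, ∀ j ∈ Λ, |S.f i u| ≤ |S.f j x|) →
      ‖S.P A u‖ ≤ 2 * C * (B * ‖z‖) := fun u hu => by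
    refine (hC.norm_P_le hΛ hcard hA hN hu).trans ?_
    rw [htail]
    gcongr
    exact hB N z
  have hPx := norm_P_le x fun i hi j hj => hΛ j hj i (Finset.disjoint_left.mp hdisj hi)
  calc ‖x - S.P Λ x‖ = ‖g + (S.P A x - S.P A g)‖ := by rw [hdecomp]
    _ ≤ C * (B * ‖z‖) + (2 * C * (B * ‖z‖) + 2 * C * (B * ‖z‖)) :=
      norm_add_le_of_le hg (norm_sub_le_of_le hPx (norm_P_le g fun i _ => hsmall i))
    _ = 5 * C * B * ‖z‖ := by ring

theorem LeftGreedyOnSets.partiallyGreedyOnSets {C : ℝ} (hC : S.LeftGreedyOnSets C) :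
    S.PartiallyGreedyOnSets C := by
  intro x E hE
  set D := Finset.range E.card with hD
  set y := x - S.P (E ∩ D) x with hy
  have fy : ∀ n, S.f n y = if n ∈ E ∧ n ∈ D then 0 else S.f n x := fun n => by
    simp only [hy, map_sub, coord_P, Finset.mem_inter]
    split_ifs <;> simp
  have hyE : S.IsGreedySet y (E \ D) := by
    intro i hi j hj
    rw [Finset.mem_sdiff] at hi hj
    rw [fy j, fy i, if_neg fun h : i ∈ E ∧ i ∈ D => hi.2 h.2]
    split_ifs with h
    · simp
    · exact hE i hi.1 j (by tauto)
  have hcard : (D \ E).card = (E \ D).card := Finset.card_sdiff_comm (by simp [hD])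
  have hlt : ∀ i ∈ D \ E, ∀ j ∈ E \ D, i < j := fun i hi j hj => by
    simp only [hD, Finset.mem_sdiff, Finset.mem_range] at hi hj
    omega
  have hleft : y - S.P (E \ D) y = x - S.P E x := S.ext_coord fun n => by
    simp only [map_sub, coord_P, fy, Finset.mem_sdiff]
    grind
  have hright : y - ∑ i ∈ D \ E, S.f i x • S.e i = x - S.P D x := S.ext_coord fun n => by
    simp only [map_sub, coord_P, coord_sum, fy, Finset.mem_sdiff]
    grind
  simpa only [hleft, hright] using hC y (E \ D) (D \ E) (fun i => S.f i x) hyE hcard hlt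

end GreedySets

end SchauderBasisSys

theorem stmt_5_general {X : Type*} [NormedAddCommGroup X] [NormedSpace ℝ X]
    (S : SchauderBasisSys X)
    (hS : ∃ B : ℝ, ∀ (n : ℕ) (x : X), ‖x - S.P (Finset.range n) x‖ ≤ B * ‖x‖) :
    S.PartiallyGreedy ↔
      ∃ C : ℝ, ∀ (x : X) (ρ : ℕ → ℕ) (m : ℕ) (A : Finset ℕ) (a : ℕ → ℝ),
        S.IsGreedyOrdering x ρ → A.card = m →
        (∀ i ∈ A, ∀ j ∈ Lam ρ m, i < j) →
        ‖x - S.G x ρ m‖ ≤ C * ‖x - ∑ i ∈ A, a i • S.e i‖ := by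
  obtain ⟨B, hB⟩ := hS
  simp only [PartiallyGreedy, ← partiallyGreedyOnSets_iff, ← leftGreedyOnSets_iff]
  exact ⟨fun ⟨C, hC⟩ => ⟨5 * C * B, hC.leftGreedyOnSets hB⟩,
    fun ⟨C, hC⟩ => ⟨C, hC.partiallyGreedyOnSets⟩⟩

/-- A Schauder basis of a real Banach space is partially greedy if and
only if there is a constant `C` such that `‖x - G_m(x)‖ ≤ C ‖x - ∑_{i ∈ A} a_i e_i‖` for
every `x`, every `m`, every greedy ordering, every finite `A` with `|A| = m` and
`max A < α_m(x) = min Λ_m(x)`, and all real scalars `(a_i)` (property `(*)`,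
i.e. `‖x - G_m(x)‖ ≤ C σ^L_m(x)`). -/
theorem stmt_5 {X : Type*} [NormedAddCommGroup X] [NormedSpace ℝ X] [CompleteSpace X]
    (S : SchauderBasisSys X) :
    S.PartiallyGreedy ↔
      ∃ C : ℝ, ∀ (x : X) (ρ : ℕ → ℕ) (m : ℕ) (A : Finset ℕ) (a : ℕ → ℝ),
        S.IsGreedyOrdering x ρ → A.card = m →
        (∀ i ∈ A, ∀ j ∈ Lam ρ m, i < j) →
        ‖x - S.G x ρ m‖ ≤ C * ‖x - ∑ i ∈ A, a i • S.e i‖ :=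
  stmt_5_general S S.exists_norm_sub_P_range_le
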